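/- arXiv:1104.2547 — 2 statements merged into one kernel-verified Lean document; each statement's English description precedes it below -/
import Mathlib

section
/- Let n ≥ 2 and let F₀,…,F_{2n−1} be a bipyramidal one-factorization (not necessarily perfect) of G_{2n+2} such that the edge {0,∞₁} belongs to F₀, and let r ∈ Z_{2n} be the vertex matched with ∞₂ in F₀. Then S = F₀ \ {{0,∞₁},{r,∞₂}} is an even starter in Z_{2n}: it is a set of n−1 pairwise disjoint unordered pairs of nonzero elements of Z_{2n}, and for every i ∈ Z_{2n} with i ≠ 0 and i ≠ n there is a pair {x,y} ∈ S with i = x−y or i = y−x. -/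
/-! Common definitions: C-codes, even starters, even 2-starters,
and bipyramidal (perfect) one-factorizations of the graph `G_{2n+2}`. -/

/-- Translate each unordered pair in `C` by `i`. -/
def shiftSet {m : ℕ} (i : ZMod m) (C : Set (Sym2 (ZMod m))) : Set (Sym2 (ZMod m)) :=
  (Sym2.map (· + i)) '' C

/-- `C` consists of `k` pairwise disjoint unordered pairs (2-element sets) of nonzero
elements of `ZMod m`. -/
def IsPairing (m k : ℕ) (C : Set (Sym2 (ZMod m))) : Prop :=
  C.ncard = k ∧ (∀ e ∈ C, ¬ e.IsDiag) ∧ (∀ e ∈ C, (0 : ZMod m) ∉ e) ∧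
    (∀ e ∈ C, ∀ e' ∈ C, e ≠ e' → ∀ a, a ∈ e → a ∉ e')

/-- The defining condition of a C-code with columns `C_i = i + C0`:
for all `a ≠ b`, the columns `C_a` and `C_b` are disjoint, the graph on `ZMod m`
with edge set `C_a ∪ C_b` has no cycle, and `a`, `b` are in different components. -/
def CCodeCond (m : ℕ) (C0 : Set (Sym2 (ZMod m))) : Prop :=
  ∀ a b : ZMod m, a ≠ b →
    shiftSet a C0 ∩ shiftSet b C0 = ∅ ∧
    (SimpleGraph.fromEdgeSet (shiftSet a C0 ∪ shiftSet b C0)).IsAcyclic ∧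
    ¬ (SimpleGraph.fromEdgeSet (shiftSet a C0 ∪ shiftSet b C0)).Reachable a b

/-- `C0` defines a C-code of length `2n`. -/
def IsCCode (n : ℕ) (C0 : Set (Sym2 (ZMod (2*n)))) : Prop :=
  IsPairing (2*n) (n-1) C0 ∧ CCodeCond (2*n) C0

/-- An even starter in `ZMod (2n)`. -/
def IsEvenStarter (n : ℕ) (S : Set (Sym2 (ZMod (2*n)))) : Prop :=
  IsPairing (2*n) (n-1) S ∧
  ∀ i : ZMod (2*n), i ≠ 0 → i ≠ (n : ZMod (2*n)) →
    ∃ x y : ZMod (2*n), s(x, y) ∈ S ∧ (i = x - y ∨ i = y - x)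

/-- An even starter in `ZMod m` for even `m`, phrased with `n = m / 2`. -/
def IsEvenStarterMod (m : ℕ) (S : Set (Sym2 (ZMod m))) : Prop :=
  IsPairing m (m / 2 - 1) S ∧
  ∀ i : ZMod m, i ≠ 0 → i ≠ ((m / 2 : ℕ) : ZMod m) →
    ∃ x y : ZMod m, s(x, y) ∈ S ∧ (i = x - y ∨ i = y - x)

/-- Vertices of `G_{2n+2}`: `Sum.inl i` for `i ∈ ZMod (2n)`, and `Sum.inr false = ∞₁`,
`Sum.inr true = ∞₂`. -/
abbrev Vtx (n : ℕ) : Type := ZMod (2*n) ⊕ Bool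

/-- The graph `G_{2n+2}`: all pairs of distinct vertices are adjacent except
`{∞₁, ∞₂}` and the pairs `{i, i+n}` for `i ∈ ZMod (2n)`. -/
def Ggraph (n : ℕ) : SimpleGraph (Vtx n) :=
  SimpleGraph.fromRel fun u v =>
    match u, v with
    | Sum.inl i, Sum.inl j => j ≠ i + (n : ZMod (2*n))
    | Sum.inl _, Sum.inr _ => True
    | Sum.inr _, Sum.inl _ => True
    | Sum.inr _, Sum.inr _ => False

/-- The permutation `σ^i` (rotation by `i` on `ZMod (2n)`, fixing `∞₁` and `∞₂`). -/
def vshift (n : ℕ) (i : ZMod (2*n)) : Vtx n → Vtx n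
  | Sum.inl x => Sum.inl (x + i)
  | Sum.inr b => Sum.inr b

/-- The involution swapping `∞₁` and `∞₂` and fixing all elements of `ZMod (2n)`. -/
def iotaSwap (n : ℕ) : Vtx n → Vtx n
  | Sum.inl x => Sum.inl x
  | Sum.inr b => Sum.inr (!b)

/-- `F` is a perfect matching (one-factor) of `G_{2n+2}`. -/
def IsOneFactor (n : ℕ) (F : Set (Sym2 (Vtx n))) : Prop :=
  F ⊆ (Ggraph n).edgeSet ∧ ∀ v : Vtx n, ∃! e, e ∈ F ∧ v ∈ e

/-- A bipyramidal one-factorization of `G_{2n+2}`: `2n` pairwise edge-disjoint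
one-factors whose union is the whole edge set, with `F i = σ^i (F 0)`. -/
def IsBipyramidalOF (n : ℕ) (F : ZMod (2*n) → Set (Sym2 (Vtx n))) : Prop :=
  (∀ i, IsOneFactor n (F i)) ∧ (∀ i j, i ≠ j → F i ∩ F j = ∅) ∧
    (⋃ i, F i) = (Ggraph n).edgeSet ∧
    ∀ i, F i = (Sym2.map (vshift n i)) '' (F 0)

/-- The graph with edge set `E` is a Hamiltonian cycle: it is connected and every
vertex has degree 2. -/
def IsHamCycleOn {V : Type} (E : Set (Sym2 V)) : Prop :=
  (SimpleGraph.fromEdgeSet E).Connected ∧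
    ∀ v : V, ((SimpleGraph.fromEdgeSet E).neighborSet v).ncard = 2

/-- A bipyramidal perfect one-factorization of `G_{2n+2}`. -/
def IsBipyramidalP1F (n : ℕ) (F : ZMod (2*n) → Set (Sym2 (Vtx n))) : Prop :=
  IsBipyramidalOF n F ∧ ∀ j k, j ≠ k → IsHamCycleOn (F j ∪ F k)

/-- An even starter in the multiplicative group `(ZMod p)ˣ`. -/
def IsMulEvenStarter (p : ℕ) (S : Set (Sym2 ((ZMod p)ˣ))) : Prop :=
  S.ncard = (p - 3) / 2 ∧ (∀ e ∈ S, ¬ e.IsDiag) ∧ (∀ e ∈ S, (1 : (ZMod p)ˣ) ∉ e) ∧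
    (∀ e ∈ S, ∀ e' ∈ S, e ≠ e' → ∀ a, a ∈ e → a ∉ e') ∧
    ∀ u : (ZMod p)ˣ, u ≠ 1 → u ≠ -1 →
      ∃ x y : (ZMod p)ˣ, s(x, y) ∈ S ∧ (u = x⁻¹ * y ∨ u = x * y⁻¹)

/-- The number of pairs in `S` whose difference (in either order) is `d`. -/
noncomputable def diffCount (m : ℕ) (d : ℕ) (S : Set (Sym2 (ZMod m))) : ℕ :=
  {e ∈ S | ∃ x y : ZMod m, e = s(x, y) ∧
    (y - x = (d : ZMod m) ∨ x - y = (d : ZMod m))}.ncard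

/-- `(S0, S1)` is an even 2-starter in `ZMod (2n)`: each `Sᵢ` consists of `n-1`
unordered pairs of elements of `ZMod (2n) \ {i}`, and every `d` with `1 ≤ d ≤ n-1`
occurs exactly twice as a difference of a pair, counted over both sets. -/
def IsEven2Starter (n : ℕ) (S0 S1 : Set (Sym2 (ZMod (2*n)))) : Prop :=
  S0.ncard = n - 1 ∧ S1.ncard = n - 1 ∧
    (∀ e ∈ S0, ¬ e.IsDiag) ∧ (∀ e ∈ S1, ¬ e.IsDiag) ∧
    (∀ e ∈ S0, (0 : ZMod (2*n)) ∉ e) ∧ (∀ e ∈ S1, (1 : ZMod (2*n)) ∉ e) ∧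
    ∀ d : ℕ, 1 ≤ d → d ≤ n - 1 →
      diffCount (2*n) d S0 + diffCount (2*n) d S1 = 2

/-- The `i`-th column induced by `(S0, S1)`:
`C_i = {{x + 2⌊ī/2⌋, y + 2⌊ī/2⌋} : {x,y} ∈ S_{ī mod 2}}` where `ī = i.val`. -/
def qCol (n : ℕ) (S0 S1 : Set (Sym2 (ZMod (2*n)))) (i : ZMod (2*n)) :
    Set (Sym2 (ZMod (2*n))) :=
  (Sym2.map (· + ((2 * (i.val / 2) : ℕ) : ZMod (2*n)))) ''
    (if i.val % 2 = 0 then S0 else S1)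

/-- The quasi-C-code condition for the column family induced by `(S0, S1)`. -/
def QuasiCCodeCond (n : ℕ) (S0 S1 : Set (Sym2 (ZMod (2*n)))) : Prop :=
  ∀ a b : ZMod (2*n), a ≠ b →
    qCol n S0 S1 a ∩ qCol n S0 S1 b = ∅ ∧
    (SimpleGraph.fromEdgeSet (qCol n S0 S1 a ∪ qCol n S0 S1 b)).IsAcyclic ∧
    ¬ (SimpleGraph.fromEdgeSet (qCol n S0 S1 a ∪ qCol n S0 S1 b)).Reachable a b

/-!
Every translate of `F 0` keeps the differences `x - y` of its pairs inside `ZMod (2n)`. As the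
translates exhaust the edges of `G_{2n+2}`, which include `{i, 0}` for every `i ≠ 0, n`, each such
`i` is already a difference in `F 0`. The number of pairs comes from double counting the incidences
between the `2n + 2` vertices and the edges of `F 0`, two of which contain `∞₁` or `∞₂`.
-/

section Matching

variable {V : Type*} {M : Set (Sym2 V)}

theorem pairwiseDisjoint_of_existsUnique_mem (hM : ∀ v, ∃! e, e ∈ M ∧ v ∈ e) :
    M.PairwiseDisjoint (fun e ↦ (e : Set V)) := by
  intro e he e' he' hne
  exact Set.disjoint_left.2 fun v hv hv' ↦ hne ((hM v).unique ⟨he, hv⟩ ⟨he', hv'⟩)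

theorem two_mul_ncard_eq_card_of_existsUnique_mem [Finite V] (hdiag : ∀ e ∈ M, ¬ e.IsDiag)
    (hM : ∀ v, ∃! e, e ∈ M ∧ v ∈ e) : 2 * M.ncard = Nat.card V := by
  classical
  have := Fintype.ofFinite V
  have edges_at (v : V) : (M.toFinset.bipartiteAbove (· ∈ ·) v).card = 1 := by
    rw [Finset.card_eq_one_iff_existsUnique]
    simpa [Finset.mem_bipartiteAbove] using hM v
  have vertices_of (e : Sym2 V) (he : e ∈ M.toFinset) :
      ((Finset.univ : Finset V).bipartiteBelow (· ∈ ·) e).card = 2 := by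
    rw [← Sym2.card_toFinset_of_not_isDiag e (hdiag e (Set.mem_toFinset.1 he))]
    congr 1
    ext v
    simp [Finset.mem_bipartiteBelow]
  have incidences := Finset.card_mul_eq_card_mul _ (fun v _ ↦ edges_at v) vertices_of
  rw [Set.ncard_eq_toFinset_card', Nat.card_eq_fintype_card, ← Finset.card_univ]
  lia

end Matching

section FinitePairs

variable {α β : Type*} {M : Set (Sym2 (α ⊕ β))}

/-- The edges of `M` with both ends in `α`, as pairs in `α`. With `α = ZMod (2n)` and
`β = {∞₁, ∞₂}`, these are the edges of a one-factor that avoid the points at infinity. -/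
def finitePairs (M : Set (Sym2 (α ⊕ β))) : Set (Sym2 α) :=
  Sym2.map Sum.inl ⁻¹' M

theorem inr_notMem_map_inl (b : β) (e : Sym2 α) : (Sum.inr b : α ⊕ β) ∉ e.map Sum.inl := by
  simp [Sym2.mem_map]

theorem finitePairs_image_sumMap {α' β' : Type*} (f : α → α') (g : β → β')
    (M : Set (Sym2 (α ⊕ β))) :
    finitePairs (Sym2.map (Sum.map f g) '' M) = Sym2.map f '' finitePairs M := by
  ext d
  constructor
  · rintro ⟨e, he, hed⟩
    induction d with | _ x y
    induction e with | _ u v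
    rcases u with a | b <;> rcases v with a' | b'
    case inl.inl => exact ⟨s(a, a'), he, by simpa using hed⟩
    all_goals simp at hed
  · rintro ⟨e, he, rfl⟩
    refine ⟨e.map Sum.inl, he, ?_⟩
    rw [Sym2.map_map, Sym2.map_map]
    rfl

theorem not_isDiag_of_mem_finitePairs (hdiag : ∀ e ∈ M, ¬ e.IsDiag) {e : Sym2 α}
    (he : e ∈ finitePairs M) : ¬ e.IsDiag :=
  fun h ↦ hdiag _ he ((Sym2.isDiag_map Sum.inl_injective).2 h)

theorem pairwiseDisjoint_finitePairs (hM : M.PairwiseDisjoint (fun e ↦ (e : Set (α ⊕ β)))) :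
    (finitePairs M).PairwiseDisjoint (fun e ↦ (e : Set α)) := by
  intro e he e' he' hne
  refine Set.disjoint_left.2 fun a ha ha' ↦ hne ?_
  exact Sym2.map.injective Sum.inl_injective <| hM.elim_set he he' (Sum.inl a)
    (Sym2.mem_map.2 ⟨a, ha, rfl⟩) (Sym2.mem_map.2 ⟨a, ha', rfl⟩)

theorem notMem_of_mem_finitePairs (hM : M.PairwiseDisjoint (fun e ↦ (e : Set (α ⊕ β))))
    {a : α} {b : β} (hab : s(Sum.inl a, Sum.inr b) ∈ M) {e : Sym2 α} (he : e ∈ finitePairs M) :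
    a ∉ e := by
  intro ha
  have heq : e.map Sum.inl = s(Sum.inl a, Sum.inr b) :=
    hM.elim_set he hab (Sum.inl a) (Sym2.mem_map.2 ⟨a, ha, rfl⟩) (Sym2.mem_mk_left _ _)
  exact inr_notMem_map_inl b e (heq ▸ Sym2.mem_mk_right _ _)

theorem image_inl_finitePairs (hM : M.PairwiseDisjoint (fun e ↦ (e : Set (α ⊕ β)))) {f : β → α}
    (hf : ∀ b, s(Sum.inl (f b), Sum.inr b) ∈ M) :
    Sym2.map Sum.inl '' finitePairs M = M \ Set.range fun b ↦ s(Sum.inl (f b), Sum.inr b) := by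
  ext e
  constructor
  · rintro ⟨d, hd, rfl⟩
    refine ⟨hd, ?_⟩
    rintro ⟨b, hb⟩
    exact inr_notMem_map_inl b d (hb ▸ Sym2.mem_mk_right _ _)
  · rintro ⟨he, hrange⟩
    have inr_notMem (b : β) : Sum.inr b ∉ e := fun hb ↦
      hrange ⟨b, hM.elim_set (hf b) he (Sum.inr b) (Sym2.mem_mk_right _ _) hb⟩
    induction e with | _ u v
    rcases u with a | b
    · rcases v with a' | b
      · exact ⟨s(a, a'), he, rfl⟩
      · exact absurd (Sym2.mem_mk_right _ _) (inr_notMem b)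
    · exact absurd (Sym2.mem_mk_left _ _) (inr_notMem b)

theorem ncard_finitePairs [Finite β] (hM : M.PairwiseDisjoint (fun e ↦ (e : Set (α ⊕ β))))
    {f : β → α} (hf : ∀ b, s(Sum.inl (f b), Sum.inr b) ∈ M) :
    (finitePairs M).ncard = M.ncard - Nat.card β := by
  have hinj : Function.Injective fun b ↦ s((Sum.inl (f b) : α ⊕ β), Sum.inr b) := by
    intro b b' h
    simp only [Sym2.eq_iff, Sum.inr.injEq, reduceCtorEq, false_and, or_false] at h
    exact h.2
  rw [← Set.ncard_image_of_injective _ (Sym2.map.injective Sum.inl_injective),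
    image_inl_finitePairs hM hf, Set.ncard_sdiff (Set.range_subset_iff.2 hf),
    Set.ncard_range_of_injective hinj]

end FinitePairs

theorem exists_mem_sub_eq_of_mem_shiftSet {m : ℕ} {i a b : ZMod m} {C : Set (Sym2 (ZMod m))}
    (h : s(a, b) ∈ shiftSet i C) : ∃ x y, s(x, y) ∈ C ∧ x - y = a - b := by
  obtain ⟨e, he, heab⟩ := h
  have hmap : (s(a - i, b - i)).map (· + i) = s(a, b) := by simp
  obtain rfl := Sym2.map.injective (add_left_injective i) (heab.trans hmap.symm)
  exact ⟨a - i, b - i, he, sub_sub_sub_cancel_right a b i⟩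

section OneFactor

variable {n : ℕ} {M : Set (Sym2 (Vtx n))}

theorem finitePairs_image_vshift (i : ZMod (2 * n)) (M : Set (Sym2 (Vtx n))) :
    finitePairs (Sym2.map (vshift n i) '' M) = shiftSet i (finitePairs M) := by
  have vshift_eq : vshift n i = Sum.map (· + i) id := by
    funext v
    cases v <;> rfl
  rw [vshift_eq, finitePairs_image_sumMap, shiftSet]

theorem Ggraph_adj_inl_inl {a b : ZMod (2 * n)} :
    (Ggraph n).Adj (Sum.inl a) (Sum.inl b) ↔ a ≠ b ∧ a - b ≠ n := by
  have add_self : (n : ZMod (2 * n)) + n = 0 := by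
    simpa [two_mul] using ZMod.natCast_self (2 * n)
  have antipodal_symm : b = a + n ↔ a = b + n := by
    constructor <;> intro h <;> linear_combination -h - add_self
  simp only [Ggraph, SimpleGraph.fromRel_adj, ne_eq, Sum.inl.injEq, antipodal_symm, or_self,
    sub_eq_iff_eq_add']

theorem exists_mem_finitePairs_sub_eq
    (hcover : (Ggraph n).edgeSet ⊆ ⋃ i, Sym2.map (vshift n i) '' M) {i : ZMod (2 * n)}
    (hi : i ≠ 0) (hin : i ≠ n) : ∃ x y, s(x, y) ∈ finitePairs M ∧ x - y = i := by
  have hedge : s(Sum.inl i, Sum.inl 0) ∈ (Ggraph n).edgeSet :=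
    Ggraph_adj_inl_inl.2 ⟨hi, by rwa [sub_zero]⟩
  obtain ⟨j, hj⟩ := Set.mem_iUnion.1 (hcover hedge)
  have hshift : s(i, 0) ∈ shiftSet j (finitePairs M) := finitePairs_image_vshift j M ▸ hj
  simpa only [sub_zero] using exists_mem_sub_eq_of_mem_shiftSet hshift

namespace IsOneFactor

theorem not_isDiag (hM : IsOneFactor n M) : ∀ e ∈ M, ¬ e.IsDiag :=
  fun _ he ↦ (Ggraph n).not_isDiag_of_mem_edgeSet (hM.1 he)

theorem ncard_eq [NeZero n] (hM : IsOneFactor n M) : M.ncard = n + 1 := by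
  have hcard := two_mul_ncard_eq_card_of_existsUnique_mem hM.not_isDiag hM.2
  rw [Nat.card_sum, Nat.card_zmod, Nat.card_eq_fintype_card, Fintype.card_bool] at hcard
  lia

theorem isPairing_finitePairs [NeZero n] (hM : IsOneFactor n M) {f : Bool → ZMod (2 * n)}
    (hf : ∀ b, s(Sum.inl (f b), Sum.inr b) ∈ M) (hzero : f false = 0) :
    IsPairing (2 * n) (n - 1) (finitePairs M) := by
  have hdisj := pairwiseDisjoint_of_existsUnique_mem hM.2
  refine ⟨?_, fun _ ↦ not_isDiag_of_mem_finitePairs hM.not_isDiag,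
    fun _ ↦ notMem_of_mem_finitePairs hdisj (hzero ▸ hf false), fun e he e' he' hne a ha ha' ↦ ?_⟩
  · rw [ncard_finitePairs hdisj hf, hM.ncard_eq, Nat.card_eq_fintype_card, Fintype.card_bool]
    rfl
  · exact hne ((pairwiseDisjoint_finitePairs hdisj).elim_set he he' a ha ha')

end IsOneFactor

end OneFactor

/-- From a bipyramidal one-factorization (not necessarily perfect) of
`G_{2n+2}` with `{0,∞₁} ∈ F 0` and `{r,∞₂} ∈ F 0`, the set
`S = F 0 \ {{0,∞₁},{r,∞₂}}` is an even starter in `ZMod (2n)`. -/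
theorem stmt2 (n : ℕ) (hn : 2 ≤ n)
    (F : ZMod (2*n) → Set (Sym2 (Vtx n)))
    (hF : IsBipyramidalOF n F)
    (h1 : s((Sum.inl (0 : ZMod (2*n)) : Vtx n), Sum.inr false) ∈ F 0)
    (r : ZMod (2*n))
    (h2 : s((Sum.inl r : Vtx n), Sum.inr true) ∈ F 0)
    (S : Set (Sym2 (ZMod (2*n))))
    (hS : (Sym2.map (Sum.inl : ZMod (2*n) → Vtx n)) '' S =
      F 0 \ {s((Sum.inl (0 : ZMod (2*n)) : Vtx n), Sum.inr false),
             s((Sum.inl r : Vtx n), Sum.inr true)}) :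
    IsEvenStarter n S := by
  have : NeZero n := ⟨by lia⟩
  obtain ⟨hfactor, -, hunion, hshift⟩ := hF
  have hpartner : ∀ b, s(Sum.inl (cond b r 0), Sum.inr b) ∈ F 0 := Bool.forall_bool.2 ⟨h1, h2⟩
  have himage : Sym2.map (Sum.inl : _ → Vtx n) '' S = Sym2.map Sum.inl '' finitePairs (F 0) := by
    rw [image_inl_finitePairs (pairwiseDisjoint_of_existsUnique_mem (hfactor 0).2) hpartner,
      Bool.range_eq, hS]
    rfl
  obtain rfl := (Sym2.map.injective Sum.inl_injective).image_injective himage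
  refine ⟨(hfactor 0).isPairing_finitePairs hpartner rfl, fun i hi hin ↦ ?_⟩
  have hcover : (Ggraph n).edgeSet ⊆ ⋃ i, Sym2.map (vshift n i) '' F 0 :=
    hunion ▸ (Set.iUnion_congr hshift).subset
  obtain ⟨x, y, hxy, hdiff⟩ := exists_mem_finitePairs_sub_eq hcover hi hin
  exact ⟨x, y, hxy, .inl hdiff.symm⟩
end

section
/- For every prime p ≥ 5, the set Ŝ_E^B = {{x,y} : x,y ∈ (ℤ/pℤ)ˣ \ {1, 2⁻¹, 2, −1}, x + y = 1} ∪ {{2⁻¹, −1}} is an even starter in the multiplicative group (ℤ/pℤ)ˣ: it consists of (p−3)/2 pairwise disjoint unordered pairs of elements of (ℤ/pℤ)ˣ \ {1}, and for every u ∈ (ℤ/pℤ)ˣ with u ≠ 1 and u ≠ −1 there is a pair {x,y} ∈ Ŝ_E^B with u = x⁻¹y or u = xy⁻¹. -/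
/-! The involution `x ↦ 1 - x` pairs off the elements of `F \ {0, 1}` other than its fixed point
`2⁻¹`. Exchanging the orbit `{2, -1}` for `{2⁻¹, -1}` leaves a pairing of `Fˣ \ {1, 2}`, so the
pairs are disjoint and their number follows by counting. The quotient `u` determines a unique pair
`x = (1 + u)⁻¹`, `y = u * (1 + u)⁻¹` with `x + y = 1`; it is `{2, -1}` only for `u = -2` and
`u = -2⁻¹`, which are the quotients of the new pair. -/

section Pairing

variable {α : Type*} {S : Set (Sym2 α)}

theorem pairwiseDisjoint_coe_of_partner_unique
    (h : ∀ a b c, s(a, b) ∈ S → s(a, c) ∈ S → b = c) :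
    S.PairwiseDisjoint fun e ↦ (e : Set α) := by
  refine fun e he e' he' hne ↦ Set.disjoint_left.mpr fun a ha ha' ↦ hne ?_
  obtain ⟨b, rfl⟩ := ha
  obtain ⟨c, rfl⟩ := ha'
  rw [h a b c he he']

theorem ncard_coe_of_not_isDiag {e : Sym2 α} (he : ¬e.IsDiag) : (e : Set α).ncard = 2 := by
  induction e with
  | _ a b => rw [Sym2.coe_mk, Set.ncard_pair (mt Sym2.mk_isDiag_iff.mpr he)]

theorem ncard_biUnion_coe_eq_ncard_mul_two (hS : S.Finite) (hdiag : ∀ e ∈ S, ¬e.IsDiag)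
    (hdisj : S.PairwiseDisjoint fun e ↦ (e : Set α)) :
    (⋃ e ∈ S, (e : Set α)).ncard = S.ncard * 2 := by
  have hcard : ∀ e ∈ S, (e : Set α).ncard = 2 := fun e he ↦ ncard_coe_of_not_isDiag (hdiag e he)
  rw [hS.ncard_biUnion (fun e he ↦ Set.finite_of_ncard_ne_zero (by simp [hcard e he])) hdisj,
    finsum_mem_congr rfl hcard, finsum_mem_eq_finite_toFinset_sum _ hS, Finset.sum_const,
    ← Set.ncard_eq_toFinset_card S hS, smul_eq_mul]

theorem mem_biUnion_coe_iff {a : α} : a ∈ ⋃ e ∈ S, (e : Set α) ↔ ∃ b, s(a, b) ∈ S := by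
  simp only [Set.mem_iUnion₂, SetLike.mem_coe, exists_prop]
  constructor
  · rintro ⟨_, he, b, rfl⟩
    exact ⟨b, he⟩
  · rintro ⟨b, hb⟩
    exact ⟨s(a, b), hb, Sym2.mem_mk_left a b⟩

end Pairing

/-- An even starter in a finite group `G` of even order with respect to an element `ι` of order 2:
`|G| / 2 - 1` disjoint pairs of non-identity elements, whose quotients exhaust `G \ {1, ι}`.
For `G = (ZMod p)ˣ` and `ι = -1` this is `IsMulEvenStarter p`. -/
structure IsGroupEvenStarter {G : Type*} [Group G] (ι : G) (S : Set (Sym2 G)) : Prop where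
  ncard_eq : S.ncard = Nat.card G / 2 - 1
  not_isDiag : ∀ e ∈ S, ¬e.IsDiag
  one_notMem : ∀ e ∈ S, (1 : G) ∉ e
  pairwiseDisjoint : S.PairwiseDisjoint fun e ↦ (e : Set G)
  exists_quotient : ∀ u : G, u ≠ 1 → u ≠ ι →
    ∃ x y : G, s(x, y) ∈ S ∧ (u = x⁻¹ * y ∨ u = x * y⁻¹)

theorem IsGroupEvenStarter.isMulEvenStarter {p : ℕ} [Fact p.Prime] {S : Set (Sym2 (ZMod p)ˣ)}
    (h : IsGroupEvenStarter (-1) S) : IsMulEvenStarter p S := by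
  refine ⟨?_, h.not_isDiag, h.one_notMem, fun e he e' he' hne a ha ↦
    Set.disjoint_left.mp (h.pairwiseDisjoint he he' hne) ha, h.exists_quotient⟩
  rw [h.ncard_eq, Nat.card_eq_fintype_card, ZMod.card_units]
  omega

/-- The set `Ŝ_E^B` of pairs of units of a field `F`. The parameter `z` is meant to be `2⁻¹` as a
unit; the definition does not enforce `(z : F) = 2⁻¹`. -/
def sumOneStarter {F : Type*} [Field F] (z : Fˣ) : Set (Sym2 Fˣ) :=
  {e | ∃ x y : Fˣ, e = s(x, y) ∧
    (x : F) ∉ ({1, (2 : F)⁻¹, 2, -1} : Set F) ∧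
    (y : F) ∉ ({1, (2 : F)⁻¹, 2, -1} : Set F) ∧
    (x : F) + (y : F) = 1} ∪ {s(z, -1)}

namespace sumOneStarter

variable {F : Type*} [Field F] {z : Fˣ}

theorem two_mul_val_eq_one (hz : (z : F) = 2⁻¹) : 2 * (z : F) = 1 := by
  have two_ne_zero : (2 : F) ≠ 0 := fun h ↦ z.ne_zero (by rw [hz, h, inv_zero])
  rw [hz, mul_inv_cancel₀ two_ne_zero]

theorem val_inv_eq_two (hz : (z : F) = 2⁻¹) : ((z⁻¹ : Fˣ) : F) = 2 := by
  rw [Units.val_inv_eq_inv_val, hz, inv_inv]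

theorem ne_one (hz : (z : F) = 2⁻¹) : z ≠ 1 := by
  rintro rfl
  have h := two_mul_val_eq_one hz
  rw [Units.val_one] at h
  exact one_ne_zero (α := F) (by linear_combination h)

theorem neg_one_ne_one (hz : (z : F) = 2⁻¹) : (-1 : Fˣ) ≠ 1 := by
  intro h
  have h' : (-1 : F) = 1 := by simpa using congrArg Units.val h
  exact one_ne_zero (α := F) (by
    linear_combination -two_mul_val_eq_one hz - (z : F) * h')

theorem neg_one_ne_inv (h3 : (3 : F) ≠ 0) (hz : (z : F) = 2⁻¹) : -1 ≠ z⁻¹ := by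
  intro h
  have h' : (-1 : F) = 2 := by simpa [val_inv_eq_two hz] using congrArg Units.val h
  exact h3 (by linear_combination -h')

theorem ne_inv (h3 : (3 : F) ≠ 0) (hz : (z : F) = 2⁻¹) : z ≠ z⁻¹ := by
  intro h
  have h' : (z : F) = 2 := (congrArg Units.val h).trans (val_inv_eq_two hz)
  exact h3 (by linear_combination two_mul_val_eq_one hz - 2 * h')

theorem ne_neg_one (h3 : (3 : F) ≠ 0) (hz : (z : F) = 2⁻¹) : z ≠ -1 := by
  rintro rfl
  exact neg_one_ne_inv h3 hz inv_neg_one.symm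

theorem val_notMem_iff (hz : (z : F) = 2⁻¹) {x : Fˣ} :
    (x : F) ∉ ({1, (2 : F)⁻¹, 2, -1} : Set F) ↔ x ≠ 1 ∧ x ≠ z ∧ x ≠ z⁻¹ ∧ x ≠ -1 := by
  simp only [Set.mem_insert_iff, Set.mem_singleton_iff, not_or, ne_eq, Units.ext_iff,
    Units.val_one, Units.val_neg, val_inv_eq_two hz, hz]

theorem ne_one_of_val_add_val_eq_one {x y : Fˣ} (hxy : (x : F) + y = 1) : x ≠ 1 := by
  rintro rfl
  rw [Units.val_one] at hxy
  exact y.ne_zero (by linear_combination hxy)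

theorem mk_mem_iff (hz : (z : F) = 2⁻¹) {x y : Fˣ} :
    s(x, y) ∈ sumOneStarter z ↔
      ((x : F) + y = 1 ∧ x ≠ z ∧ x ≠ z⁻¹ ∧ x ≠ -1) ∨ s(x, y) = s(z, -1) := by
  refine or_congr_left ⟨?_, ?_⟩
  · rintro ⟨x', y', he, hx, hy, hxy⟩
    rcases Sym2.eq_iff.mp he with ⟨rfl, rfl⟩ | ⟨rfl, rfl⟩
    · exact ⟨hxy, ((val_notMem_iff hz).mp hx).2⟩
    · exact ⟨(add_comm _ _).trans hxy, ((val_notMem_iff hz).mp hy).2⟩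
  · rintro ⟨hxy, hxz, hxi, hxn⟩
    have hyx : (y : F) + x = 1 := (add_comm _ _).trans hxy
    refine ⟨x, y, rfl, (val_notMem_iff hz).mpr ⟨ne_one_of_val_add_val_eq_one hxy, hxz, hxi, hxn⟩,
      (val_notMem_iff hz).mpr ⟨ne_one_of_val_add_val_eq_one hyx, ?_, ?_, ?_⟩, hxy⟩
    · rintro rfl
      exact hxz (Units.ext (by linear_combination hxy - two_mul_val_eq_one hz))
    · rintro rfl
      rw [val_inv_eq_two hz] at hxy
      exact hxn (Units.ext (by rw [Units.val_neg, Units.val_one]; linear_combination hxy))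
    · rintro rfl
      rw [Units.val_neg, Units.val_one] at hxy
      exact hxi (Units.ext (by rw [val_inv_eq_two hz]; linear_combination hxy))

theorem exceptional_mem (z : Fˣ) : s(z, -1) ∈ sumOneStarter z :=
  Or.inr rfl

theorem not_isDiag (h3 : (3 : F) ≠ 0) (hz : (z : F) = 2⁻¹) {e : Sym2 Fˣ}
    (he : e ∈ sumOneStarter z) : ¬e.IsDiag := by
  induction e with
  | _ x y =>
    intro hdiag
    rcases (mk_mem_iff hz).mp he with ⟨hxy, hxz, -⟩ | hex
    · rw [← Sym2.mk_isDiag_iff.mp hdiag] at hxy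
      exact hxz (Units.ext (by
        linear_combination (z : F) * hxy - (x : F) * two_mul_val_eq_one hz))
    · rw [hex] at hdiag
      exact ne_neg_one h3 hz (Sym2.mk_isDiag_iff.mp hdiag)

theorem partner_unique (hz : (z : F) = 2⁻¹) (a b c : Fˣ) (hb : s(a, b) ∈ sumOneStarter z)
    (hc : s(a, c) ∈ sumOneStarter z) : b = c := by
  have eq_or_eq {d : Fˣ} (h : s(a, d) = s(z, -1)) : a = z ∨ a = -1 :=
    Sym2.mem_iff.mp (h ▸ Sym2.mem_mk_left a d)
  rcases (mk_mem_iff hz).mp hb with ⟨hab, haz, -, han⟩ | hb' <;>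
    rcases (mk_mem_iff hz).mp hc with ⟨hac, haz', -, han'⟩ | hc'
  · exact Units.ext (add_left_cancel (hab.trans hac.symm))
  · exact ((eq_or_eq hc').elim haz han).elim
  · exact ((eq_or_eq hb').elim haz' han').elim
  · exact Sym2.congr_right.mp (hb'.trans hc'.symm)

theorem exists_partner_iff (h3 : (3 : F) ≠ 0) (hz : (z : F) = 2⁻¹) {a : Fˣ} :
    (∃ b, s(a, b) ∈ sumOneStarter z) ↔ a ≠ 1 ∧ a ≠ z⁻¹ := by
  constructor
  · rintro ⟨b, hab⟩
    rcases (mk_mem_iff hz).mp hab with ⟨hsum, -, hai, -⟩ | hex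
    · exact ⟨ne_one_of_val_add_val_eq_one hsum, hai⟩
    · rcases Sym2.mem_iff.mp (hex ▸ Sym2.mem_mk_left a b) with rfl | rfl
      · exact ⟨ne_one hz, ne_inv h3 hz⟩
      · exact ⟨neg_one_ne_one hz, neg_one_ne_inv h3 hz⟩
  · rintro ⟨ha1, hai⟩
    by_cases haz : a = z
    · exact ⟨-1, haz ▸ exceptional_mem z⟩
    by_cases han : a = -1
    · exact ⟨z, by rw [han, Sym2.eq_swap]; exact exceptional_mem z⟩
    have hsub : (1 : F) - a ≠ 0 := sub_ne_zero.mpr fun h ↦ ha1 (Units.ext h.symm)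
    exact ⟨Units.mk0 _ hsub, (mk_mem_iff hz).mpr (.inl ⟨add_sub_cancel _ _, haz, hai, han⟩)⟩

theorem biUnion_coe (h3 : (3 : F) ≠ 0) (hz : (z : F) = 2⁻¹) :
    ⋃ e ∈ sumOneStarter z, (e : Set Fˣ) = {1, z⁻¹}ᶜ := by
  ext a
  rw [mem_biUnion_coe_iff, exists_partner_iff h3 hz]
  simp only [Set.mem_compl_iff, Set.mem_insert_iff, Set.mem_singleton_iff, not_or, ne_eq]

theorem one_notMem (h3 : (3 : F) ≠ 0) (hz : (z : F) = 2⁻¹) {e : Sym2 Fˣ}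
    (he : e ∈ sumOneStarter z) : 1 ∉ e := by
  rintro ⟨b, rfl⟩
  exact ((exists_partner_iff h3 hz).mp ⟨b, he⟩).1 rfl

theorem pairwiseDisjoint (hz : (z : F) = 2⁻¹) :
    (sumOneStarter z).PairwiseDisjoint fun e ↦ (e : Set Fˣ) :=
  pairwiseDisjoint_coe_of_partner_unique (partner_unique hz)

theorem ncard_eq [Finite F] (h3 : (3 : F) ≠ 0) (hz : (z : F) = 2⁻¹) :
    (sumOneStarter z).ncard = Nat.card Fˣ / 2 - 1 := by
  have hunion : ({1, z⁻¹}ᶜ : Set Fˣ).ncard = (sumOneStarter z).ncard * 2 := by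
    rw [← biUnion_coe h3 hz]
    exact ncard_biUnion_coe_eq_ncard_mul_two (Set.toFinite _) (fun _ ↦ not_isDiag h3 hz)
      (pairwiseDisjoint hz)
  have hpair : ({1, z⁻¹} : Set Fˣ).ncard = 2 :=
    Set.ncard_pair (inv_ne_one.mpr (ne_one hz)).symm
  have htotal := Set.ncard_add_ncard_compl ({1, z⁻¹} : Set Fˣ)
  omega

theorem inv_mul_inv_mem (hz : (z : F) = 2⁻¹) {u t : Fˣ} (ht : (t : F) = 1 + u) (hu : u ≠ 1)
    (hu_two : u ≠ -z⁻¹) (hu_half : u ≠ -z) : s(t⁻¹, u * t⁻¹) ∈ sumOneStarter z := by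
  refine (mk_mem_iff hz).mpr (.inl ⟨?_, ?_, ?_, ?_⟩)
  · calc ((t⁻¹ : Fˣ) : F) + (u * t⁻¹ : Fˣ) = t * (t⁻¹ : Fˣ) := by rw [ht, Units.val_mul]; ring
      _ = 1 := t.mul_inv
  · intro h
    have ht2 : (t : F) = 2 := by rw [inv_eq_iff_eq_inv.mp h, val_inv_eq_two hz]
    exact hu (Units.ext (by rw [Units.val_one]; linear_combination ht2 - ht))
  · intro h
    have htz : (t : F) = z := by rw [inv_injective h]
    exact hu_half (Units.ext (by
      rw [Units.val_neg]
      linear_combination htz - ht + two_mul_val_eq_one hz))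
  · intro h
    have htn : (t : F) = -1 := by simp [inv_eq_iff_eq_inv.mp h]
    exact hu_two (Units.ext (by
      rw [Units.val_neg, val_inv_eq_two hz]
      linear_combination htn - ht))

theorem exists_quotient (hz : (z : F) = 2⁻¹) {u : Fˣ} (hu : u ≠ 1) (hun : u ≠ -1) :
    ∃ x y : Fˣ, s(x, y) ∈ sumOneStarter z ∧ (u = x⁻¹ * y ∨ u = x * y⁻¹) := by
  by_cases hu_two : u = -z⁻¹
  · exact ⟨z, -1, exceptional_mem z, .inl (by rw [hu_two, mul_neg_one])⟩
  by_cases hu_half : u = -z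
  · exact ⟨z, -1, exceptional_mem z, .inr (by rw [hu_half, inv_neg_one, mul_neg_one])⟩
  have hsum : (1 : F) + u ≠ 0 := fun h ↦ hun (Units.ext (eq_neg_of_add_eq_zero_right h))
  set t : Fˣ := Units.mk0 _ hsum
  exact ⟨t⁻¹, u * t⁻¹, inv_mul_inv_mem hz rfl hu hu_two hu_half, .inl (by
    rw [inv_inv, mul_comm u, mul_inv_cancel_left])⟩

end sumOneStarter

theorem stmt10_general {F : Type*} [Field F] [Finite F] (h3 : (3 : F) ≠ 0) (z : Fˣ)
    (hz : (z : F) = 2⁻¹) : IsGroupEvenStarter (-1) (sumOneStarter z) where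
  ncard_eq := sumOneStarter.ncard_eq h3 hz
  not_isDiag _ := sumOneStarter.not_isDiag h3 hz
  one_notMem _ := sumOneStarter.one_notMem h3 hz
  pairwiseDisjoint := sumOneStarter.pairwiseDisjoint hz
  exists_quotient _ := sumOneStarter.exists_quotient hz

theorem zmod_three_ne_zero {p : ℕ} (hp : 3 < p) : (3 : ZMod p) ≠ 0 := by
  exact_mod_cast mt (ZMod.natCast_eq_zero_iff 3 p).mp (Nat.not_dvd_of_pos_of_lt three_pos hp)

/-- For every prime `p ≥ 5`,
`Ŝ_E^B = {{x,y} : x,y ∈ (ZMod p)ˣ \ {1, 2⁻¹, 2, -1}, x + y = 1} ∪ {{2⁻¹, -1}}` is an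
even starter in the multiplicative group `(ZMod p)ˣ`. Here `z` is the unit whose value
is `2⁻¹`. -/
theorem stmt10 (p : ℕ) [Fact p.Prime] (hp : 5 ≤ p)
    (z : (ZMod p)ˣ) (hz : (z : ZMod p) = (2 : ZMod p)⁻¹) :
    IsMulEvenStarter p
      ({e : Sym2 ((ZMod p)ˣ) | ∃ x y : (ZMod p)ˣ, e = s(x, y) ∧
        (x : ZMod p) ∉ ({1, (2 : ZMod p)⁻¹, 2, -1} : Set (ZMod p)) ∧
        (y : ZMod p) ∉ ({1, (2 : ZMod p)⁻¹, 2, -1} : Set (ZMod p)) ∧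
        (x : ZMod p) + (y : ZMod p) = 1} ∪ {s(z, (-1 : (ZMod p)ˣ))}) := by
  exact (stmt10_general (zmod_three_ne_zero (by omega)) z hz).isMulEvenStarter
end
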